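/- Let n ≥ 3 be an integer. Then Σ_{m : ZMod n} Σ_{k : ZMod n} #{ x : ZMod n → ZMod n bijective | ∀ i : ZMod n, x i = x (i + m) + k } = Σ_{d ∣ n} φ(n/d)² * (n/d)^d * d!, where φ is Euler's totient function and the right-hand sum ranges over the positive divisors d of n. -/

import Mathlib

open Nat

/-!
The condition `x i = x (i + m) + k` says that the bijection `x` intertwines translation by `m` with
translation by `-k`. A translation is semiregular: all its cycles have the same length, namely the
additive order `d` of the translating element. Hence intertwining bijections exist exactly when
`m` and `k` have the same order `d`, and they then form a torsor under the centralizer of a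
permutation with `n / d` cycles of length `d`, which has `d ^ (n / d) * (n / d)!` elements.
Summing over pairs of elements of equal order gives the formula, because a cyclic group has `φ d`
elements of order `d`.
-/

open Equiv Function

section Intertwiners

variable {α β : Type*} {σ : Perm α} {τ : Perm β}

theorem semiconj_iff_permCongr_eq {e : α ≃ β} : Semiconj e σ τ ↔ e.permCongr σ = τ := by
  rw [Equiv.ext_iff, e.surjective.forall]
  simp only [Semiconj, permCongr_apply, symm_apply_apply]

theorem orderOf_eq_of_semiconj {e : α ≃ β} (he : Semiconj e σ τ) : orderOf σ = orderOf τ := by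
  rw [← semiconj_iff_permCongr_eq.1 he, ← permCongrHom_coe, MulEquiv.orderOf_eq]

theorem card_semiconj_eq_card_centralizer {e : α ≃ β} (he : Semiconj e σ τ) :
    Nat.card {f : α ≃ β // Semiconj f σ τ} = Nat.card (Subgroup.centralizer {σ}) := by
  refine (Nat.card_congr (((Equiv.refl α).equivCongr e).subtypeEquiv fun g ↦ ?_)).symm
  rw [Subgroup.mem_centralizer_singleton_iff, Equiv.ext_iff]
  refine forall_congr' fun a ↦ ?_
  change g (σ a) = σ (g a) ↔ e (g (σ a)) = τ (e (g a))
  rw [← he.eq, e.apply_eq_iff_eq]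

end Intertwiners

/-- A permutation is semiregular if the cyclic group it generates acts freely: a power of it that
fixes a point is trivial. On a finite type this means that all cycles, fixed points included, have
the same length. -/
def IsSemiregular {α : Type*} (σ : Perm α) : Prop :=
  ∀ (j : ℕ) (a : α), (σ ^ j) a = a → σ ^ j = 1

namespace IsSemiregular

theorem permCongr {α β : Type*} {σ : Perm α} (hσ : IsSemiregular σ) (e : α ≃ β) :
    IsSemiregular (e.permCongr σ) := by
  intro j b hb
  rw [← permCongrHom_coe, ← map_pow] at hb ⊢
  rw [hσ j (e.symm b) (e.eq_symm_apply.2 hb), map_one]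

section CycleType

variable {α : Type*} [Fintype α] [DecidableEq α] {σ : Perm α}

theorem eq_orderOf_of_mem_cycleType (hσ : IsSemiregular σ) {l : ℕ} (hl : l ∈ σ.cycleType) :
    l = orderOf σ := by
  refine Nat.dvd_antisymm (Perm.dvd_of_mem_cycleType hl) ?_
  obtain ⟨c, ρ, rfl, hdisj, hc, rfl⟩ := Perm.mem_cycleType_iff.1 hl
  obtain ⟨a, ha⟩ := hc.nonempty_support
  have hρa : ρ a = a := (hdisj a).resolve_left (Perm.mem_support.1 ha)
  refine orderOf_dvd_of_pow_eq_one (hσ _ a ?_)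
  rw [hdisj.commute.mul_pow, Perm.mul_apply, Perm.pow_apply_eq_self_of_apply_eq_self hρa,
    ← hc.orderOf, pow_orderOf_eq_one, Perm.one_apply]

theorem support_eq_univ (hσ : IsSemiregular σ) (hne : σ ≠ 1) : σ.support = Finset.univ := by
  refine Finset.eq_univ_iff_forall.2 fun a ↦ Perm.mem_support.2 fun ha ↦ hne ?_
  simpa using hσ 1 a (by simpa using ha)

theorem cycleType_eq_replicate_card (hσ : IsSemiregular σ) :
    σ.cycleType = Multiset.replicate σ.cycleType.card (orderOf σ) :=
  Multiset.eq_replicate_card.2 fun _ ↦ hσ.eq_orderOf_of_mem_cycleType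

theorem card_cycleType_mul_orderOf (hσ : IsSemiregular σ) (hne : σ ≠ 1) :
    σ.cycleType.card * orderOf σ = Fintype.card α := by
  rw [← Finset.card_univ, ← hσ.support_eq_univ hne, ← σ.sum_cycleType,
    ← smul_eq_mul, ← Multiset.sum_replicate, ← hσ.cycleType_eq_replicate_card]

theorem card_cycleType (hσ : IsSemiregular σ) (hne : σ ≠ 1) :
    σ.cycleType.card = Fintype.card α / orderOf σ :=
  Nat.eq_div_of_mul_eq_left (orderOf_pos σ).ne' (hσ.card_cycleType_mul_orderOf hne)

end CycleType

section Conjugacy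

variable {α : Type*} {σ τ : Perm α}

theorem isConj_of_orderOf_eq [Finite α] (hσ : IsSemiregular σ) (hτ : IsSemiregular τ)
    (h : orderOf σ = orderOf τ) : IsConj σ τ := by
  classical
  cases nonempty_fintype α
  rw [Perm.isConj_iff_cycleType_eq]
  by_cases hσ1 : σ = 1
  · rw [hσ1, orderOf_one, eq_comm, orderOf_eq_one_iff] at h
    rw [hσ1, h]
  · have hτ1 : τ ≠ 1 := by rwa [Ne, ← orderOf_eq_one_iff, ← h, orderOf_eq_one_iff]
    rw [hσ.cycleType_eq_replicate_card, hτ.cycleType_eq_replicate_card, hσ.card_cycleType hσ1,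
      hτ.card_cycleType hτ1, h]

theorem card_centralizer [Fintype α] (hσ : IsSemiregular σ) :
    Nat.card (Subgroup.centralizer {σ}) =
      orderOf σ ^ (Fintype.card α / orderOf σ) * (Fintype.card α / orderOf σ)! := by
  classical
  rw [Perm.nat_card_centralizer]
  by_cases hne : σ = 1
  · simp [hne]
  · have hcount : σ.cycleType.card ≠ 0 := (Perm.card_cycleType_pos.2 hne).ne'
    rw [← hσ.card_cycleType hne, ← hσ.card_cycleType_mul_orderOf hne,
      hσ.cycleType_eq_replicate_card]
    simp [Multiset.toFinset_replicate, hcount]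

end Conjugacy

section Intertwiners

variable {α β : Type*} [Fintype α] [Fintype β] {σ : Perm α} {τ : Perm β}

theorem exists_semiconj (hσ : IsSemiregular σ) (hτ : IsSemiregular τ)
    (hcard : Fintype.card α = Fintype.card β) (horder : orderOf σ = orderOf τ) :
    ∃ e : α ≃ β, Semiconj e σ τ := by
  obtain ⟨e⟩ := Fintype.card_eq.1 hcard
  have horder' : orderOf (e.permCongr σ) = orderOf τ :=
    (orderOf_eq_of_semiconj (semiconj_iff_permCongr_eq.2 rfl)).symm.trans horder
  obtain ⟨ρ, hρ⟩ := isConj_iff.1 ((hσ.permCongr e).isConj_of_orderOf_eq hτ horder')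
  refine ⟨e.trans ρ, semiconj_iff_permCongr_eq.2 ?_⟩
  rw [← hρ, ← permCongr_eq_mul]
  rfl

theorem card_semiconj (hσ : IsSemiregular σ) (hτ : IsSemiregular τ)
    (hcard : Fintype.card α = Fintype.card β) :
    Nat.card {e : α ≃ β // Semiconj e σ τ} =
      if orderOf σ = orderOf τ then
        orderOf σ ^ (Fintype.card α / orderOf σ) * (Fintype.card α / orderOf σ)!
      else 0 := by
  split_ifs with horder
  · obtain ⟨e, he⟩ := hσ.exists_semiconj hτ hcard horder
    rw [card_semiconj_eq_card_centralizer he, hσ.card_centralizer]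
  · have : IsEmpty {e : α ≃ β // Semiconj e σ τ} :=
      ⟨fun e ↦ horder (orderOf_eq_of_semiconj e.2)⟩
    exact Nat.card_of_isEmpty

end Intertwiners

end IsSemiregular

section Translation

variable {A B : Type*} [AddGroup A] [AddGroup B]

theorem addRight_pow_eq_one_iff {a : A} {j : ℕ} :
    (Equiv.addRight a ^ j : Perm A) = 1 ↔ j • a = 0 := by
  simp [Equiv.ext_iff]

theorem orderOf_addRight (a : A) : orderOf (Equiv.addRight a : Perm A) = addOrderOf a :=
  Nat.dvd_right_iff_eq.1 fun _ ↦ by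
    rw [orderOf_dvd_iff_pow_eq_one, addRight_pow_eq_one_iff, addOrderOf_dvd_iff_nsmul_eq_zero]

theorem isSemiregular_addRight (a : A) : IsSemiregular (Equiv.addRight a : Perm A) := by
  intro j x hx
  rwa [nsmul_addRight, coe_addRight, add_eq_left, ← addRight_pow_eq_one_iff] at hx

theorem card_bijective_fixed_by_translation_eq_card_semiconj (m : A) (k : B) :
    Nat.card {x : A → B // Bijective x ∧ ∀ i, x i = x (i + m) + k} =
      Nat.card {e : A ≃ B // Semiconj e (Equiv.addRight m) (Equiv.addRight (-k))} := by
  have hfixed (x : A → B) : (∀ i, x i = x (i + m) + k) ↔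
      Semiconj x (Equiv.addRight m) (Equiv.addRight (-k)) :=
    forall_congr' fun i ↦ by
      rw [coe_addRight, coe_addRight, eq_add_neg_iff_add_eq, eq_comm]
  simp only [hfixed]
  exact Nat.card_congr
    { toFun x := ⟨.ofBijective x.1 x.2.1, x.2.2⟩
      invFun e := ⟨e.1, e.1.bijective, e.2⟩
      right_inv e := Subtype.ext (Equiv.ext fun _ ↦ rfl) }

variable [Fintype A] [Fintype B] {n : ℕ}

theorem card_bijective_fixed_by_translation (hA : Fintype.card A = n) (hB : Fintype.card B = n)
    (m : A) (k : B) :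
    Nat.card {x : A → B // Bijective x ∧ ∀ i, x i = x (i + m) + k} =
      if addOrderOf k = addOrderOf m then
        addOrderOf m ^ (n / addOrderOf m) * (n / addOrderOf m)!
      else 0 := by
  rw [card_bijective_fixed_by_translation_eq_card_semiconj, (isSemiregular_addRight m).card_semiconj
    (isSemiregular_addRight (-k)) (hA.trans hB.symm), hA]
  simp only [orderOf_addRight, addOrderOf_neg, eq_comm]

theorem sum_card_bijective_fixed_by_translation (hA : Fintype.card A = n)
    (hB : Fintype.card B = n) (m : A) :
    ∑ k : B, Nat.card {x : A → B // Bijective x ∧ ∀ i, x i = x (i + m) + k} =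
      Finset.card {k : B | addOrderOf k = addOrderOf m} *
        (addOrderOf m ^ (n / addOrderOf m) * (n / addOrderOf m)!) := by
  simp only [card_bijective_fixed_by_translation hA hB, ← Finset.sum_filter, Finset.sum_const,
    smul_eq_mul]

theorem total_fixed_strings_cm_rk_general (hA : Fintype.card A = n) (hB : Fintype.card B = n) :
    ∑ m : A, ∑ k : B, Nat.card {x : A → B // Bijective x ∧ ∀ i, x i = x (i + m) + k} =
      ∑ d ∈ n.divisors, Finset.card {m : A | addOrderOf m = n / d} *
        Finset.card {k : B | addOrderOf k = n / d} * (n / d) ^ d * d ! := by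
  have hn : n ≠ 0 := hA ▸ Fintype.card_ne_zero
  have hmem (m : A) : addOrderOf m ∈ n.divisors :=
    Nat.mem_divisors.2 ⟨hA ▸ addOrderOf_dvd_card, hn⟩
  simp only [sum_card_bijective_fixed_by_translation hA hB]
  rw [← Finset.sum_fiberwise_of_maps_to' (fun m _ ↦ hmem m) fun d ↦
      Finset.card {k : B | addOrderOf k = d} * (d ^ (n / d) * (n / d)!), ← Nat.sum_div_divisors]
  refine Finset.sum_congr rfl fun d hd ↦ ?_
  rw [Finset.sum_const, smul_eq_mul, Nat.div_div_self (Nat.dvd_of_mem_divisors hd) hn]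
  ring

end Translation

theorem card_addOrderOf_zmod_eq_totient {n d : ℕ} [NeZero n] (hd : d ∣ n) :
    Finset.card {m : ZMod n | addOrderOf m = d} = φ d :=
  IsAddCyclic.card_addOrderOf_eq_totient (by rwa [ZMod.card])

/-- The total number of strings fixed by the elements `(c^m, r^k)` (cyclically
shift by `m` and add `k` to every label) is `Σ_{d ∣ n} φ(n/d)² (n/d)^d d!`. -/
theorem total_fixed_strings_cm_rk (n : ℕ) (hn : 3 ≤ n) [NeZero n] :
    ∑ m : ZMod n, ∑ k : ZMod n,
        Nat.card {x : ZMod n → ZMod n // Function.Bijective x ∧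
          ∀ i : ZMod n, x i = x (i + m) + k} =
      ∑ d ∈ n.divisors, (Nat.totient (n / d)) ^ 2 * (n / d) ^ d * d ! := by
  exact (total_fixed_strings_cm_rk_general (ZMod.card n) (ZMod.card n)).trans <|
    Finset.sum_congr rfl fun d hd ↦ by
      rw [card_addOrderOf_zmod_eq_totient (Nat.div_dvd_of_dvd (Nat.dvd_of_mem_divisors hd)), sq]
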